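/- Let B̂(u) = (u·∇)u + (1/2)(Div u)u. Then for any u, v in H¹₀(𝒪; ℝ²), |⟨B̂(u) − B̂(v), u − v⟩| ≤ 2 ‖u − v‖^{3/2} · |u − v|^{1/2} · ‖v‖_{L⁴(𝒪;ℝ²)}, where ‖·‖ denotes the H¹₀-norm and |·| the L²-norm. -/

import Mathlib

/-!
Put `w = u - v` and let `b(a, c, d)` be the trilinear form `∫ ((a·∇)c + ½ (div a) c) · d`.
The correction `½ (div a) c` makes `b` antisymmetric in its last two arguments, so
`⟨B̂(u) - B̂(v), w⟩ = b(u, w, w) + b(w, v, w) = -b(w, w, v)`. Concretely, the sum of the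
integrands of `⟨B̂(u) - B̂(v), w⟩` and `b(w, w, v)` is the divergence of the compactly supported
field `F_i = w_i (v · w) + ½ u_i |w|²`, whose integral vanishes (`integral_pd_eq_zero`).

Pointwise `|((w·∇)w + ½ (div w) w) · v| ≤ 2 |∇w| |w| |v|` (`trilinear_bound`), and two applications
of Cauchy–Schwarz bound the integral by `2 ‖w‖ ‖w‖_{L⁴} ‖v‖_{L⁴}`. It remains to use the
Ladyzhenskaya inequality `‖w‖_{L⁴}⁴ ≤ |w|² ‖w‖²`, obtained by applying the
two-dimensional inequality `∫ f² ≤ (½ ∫ |∂₁f|) (½ ∫ |∂₂f|)` (`integral_sq_le`) to `f = |w|²`: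
here `½ |∂ᵢ |w|²| ≤ |w| |∇w|`. The factors `½` are what makes the constant `2` suffice.
-/

/- STATEMENT 8: for u, v ∈ H¹₀(𝒪;ℝ²),
   |⟨B̂(u) − B̂(v), u − v⟩| ≤ 2 ‖u−v‖^{3/2} |u−v|^{1/2} ‖v‖_{L⁴(𝒪;ℝ²)}. -/

noncomputable section

open MeasureTheory Real

/-- Vector fields on `ℝ²` with two components. -/
abbrev Vec := Fin 2 → ℝ × ℝ → ℝ

/-- The two coordinate directions of `ℝ²`. -/
def bdir : Fin 2 → ℝ × ℝ := ![(1, 0), (0, 1)]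

/-- `i`-th partial derivative. -/
def pd (i : Fin 2) (f : ℝ × ℝ → ℝ) (x : ℝ × ℝ) : ℝ :=
  fderiv ℝ f x (bdir i)

/-- Divergence of a vector field. -/
def divg (u : Vec) (x : ℝ × ℝ) : ℝ := ∑ i, pd i (u i) x

/-- Smooth compactly supported fields with support inside `O`:
a surrogate for membership in `H¹₀(O; ℝ²)`. -/
def H10 (O : Set (ℝ × ℝ)) (u : Vec) : Prop :=
  ∀ i, ContDiff ℝ (⊤ : ℕ∞) (u i) ∧ HasCompactSupport (u i) ∧ tsupport (u i) ⊆ O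

/-- `L²(O)` pairing of vector fields. -/
def vInner (O : Set (ℝ × ℝ)) (u v : Vec) : ℝ := ∫ x in O, ∑ j, u j x * v j x

/-- `L²(O)` pairing of scalar functions. -/
def sInner (O : Set (ℝ × ℝ)) (p q : ℝ × ℝ → ℝ) : ℝ := ∫ x in O, p x * q x

/-- `L²(O)` norm of a vector field. -/
def l2 (O : Set (ℝ × ℝ)) (u : Vec) : ℝ := Real.sqrt (∫ x in O, ∑ j, (u j x) ^ 2)

/-- `L²(O)` norm of a scalar function. -/
def sl2 (O : Set (ℝ × ℝ)) (p : ℝ × ℝ → ℝ) : ℝ := Real.sqrt (∫ x in O, (p x) ^ 2)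

/-- `H¹₀(O)` (gradient) norm of a vector field. -/
def h1 (O : Set (ℝ × ℝ)) (u : Vec) : ℝ :=
  Real.sqrt (∫ x in O, ∑ i, ∑ j, (pd i (u j) x) ^ 2)

/-- `L⁴(O)` norm of a vector field. -/
def l4 (O : Set (ℝ × ℝ)) (u : Vec) : ℝ :=
  (∫ x in O, (∑ j, (u j x) ^ 2) ^ 2) ^ ((1 : ℝ) / 4)

/-- Convection term `(u·∇)v`. -/
def conv (u v : Vec) : Vec := fun j x => ∑ i, u i x * pd i (v j) x

/-- The modified nonlinearity `B̂(u,v) = (u·∇)v + ½(divg u) v`. -/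
def Bhat2 (u v : Vec) : Vec := fun j x => conv u v j x + (1 / 2) * divg u x * v j x

/-- `B̂(u) = (u·∇)u + ½(divg u) u`. -/
def Bhat (u : Vec) : Vec := Bhat2 u u

/-- Dirichlet pairing `⟨-Δu, w⟩ = Σ_{i,j} ∫_O ∂_i u_j ∂_i w_j`. -/
def aPair (O : Set (ℝ × ℝ)) (u w : Vec) : ℝ :=
  ∫ x in O, ∑ i, ∑ j, pd i (u j) x * pd i (w j) x



/-! ### Calculus of the partial derivatives -/

lemma pd_mul {i : Fin 2} {f g : ℝ × ℝ → ℝ} {x : ℝ × ℝ} (hf : DifferentiableAt ℝ f x)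
    (hg : DifferentiableAt ℝ g x) :
    pd i (fun y => f y * g y) x = pd i f x * g x + f x * pd i g x := by
  simp only [pd, fderiv_fun_mul hf hg, add_apply,
    smul_apply, smul_eq_mul]
  ring

lemma pd_add {i : Fin 2} {f g : ℝ × ℝ → ℝ} {x : ℝ × ℝ} (hf : DifferentiableAt ℝ f x)
    (hg : DifferentiableAt ℝ g x) :
    pd i (fun y => f y + g y) x = pd i f x + pd i g x := by
  simp only [pd, fderiv_fun_add hf hg, add_apply]

lemma pd_const_mul {i : Fin 2} {f : ℝ × ℝ → ℝ} {x : ℝ × ℝ} (hf : DifferentiableAt ℝ f x)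
    (c : ℝ) : pd i (fun y => c * f y) x = c * pd i f x := by
  simp only [pd, fderiv_const_mul hf c, smul_apply, smul_eq_mul]

lemma pd_sub {i : Fin 2} {f g : ℝ × ℝ → ℝ} {x : ℝ × ℝ} (hf : DifferentiableAt ℝ f x)
    (hg : DifferentiableAt ℝ g x) :
    pd i (f - g) x = pd i f x - pd i g x := by
  simp only [pd, fderiv_sub hf hg, sub_apply]

lemma continuous_pd {f : ℝ × ℝ → ℝ} (hf : ContDiff ℝ 1 f) (i : Fin 2) :
    Continuous (pd i f) :=
  (hf.continuous_fderiv one_ne_zero).clm_apply continuous_const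

lemma integral_pd_eq_zero {f : ℝ × ℝ → ℝ} (hf : ContDiff ℝ 1 f) (hc : HasCompactSupport f)
    (i : Fin 2) : ∫ x, pd i f x = 0 := by
  have hi : Integrable (fun x => fderiv ℝ f x (bdir i)) :=
    (continuous_pd hf i).integrable_of_hasCompactSupport (hc.fderiv_apply (𝕜 := ℝ) _)
  have h := integral_mul_fderiv_eq_neg_fderiv_mul_of_integrable (μ := volume)
    (f := fun _ : ℝ × ℝ => (1 : ℝ)) (g := f) (v := bdir i) (by simp) (by simpa using hi)
    (by simpa using hf.continuous.integrable_of_hasCompactSupport hc)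
    (fun x _ => differentiableAt_const _)
    (fun x _ => hf.differentiable one_ne_zero x)
  simpa [pd] using h

/-! ### A Ladyzhenskaya inequality with explicit constant -/

/-- Half of the total variation suffices because `f b` can be recovered by integrating `f'`
either from `-∞` or from `+∞`. -/
lemma abs_le_half_integral_deriv {f : ℝ → ℝ} (hf : ContDiff ℝ 1 f) (hc : HasCompactSupport f)
    (b : ℝ) : |f b| ≤ 1 / 2 * ∫ x, |deriv f x| := by
  have hi : Integrable (fun x => |deriv f x|) :=
    ((hf.continuous_deriv le_rfl).integrable_of_hasCompactSupport hc.deriv).abs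
  have h1 : |f b| ≤ ∫ x in Set.Iic b, |deriv f x| := by
    rw [← hc.integral_Iic_deriv_eq hf b]
    exact abs_integral_le_integral_abs
  have h2 : |f b| ≤ ∫ x in Set.Ioi b, |deriv f x| := by
    rw [← abs_neg, ← hc.integral_Ioi_deriv_eq hf b]
    exact abs_integral_le_integral_abs
  have h3 := intervalIntegral.integral_Iic_add_Ioi (b := b) hi.integrableOn hi.integrableOn
  linarith

lemma abs_le_fst {f : ℝ × ℝ → ℝ} (hf : ContDiff ℝ 1 f) (hc : HasCompactSupport f)
    (z : ℝ × ℝ) : |f z| ≤ 1 / 2 * ∫ s, |pd 0 f (s, z.2)| := by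
  have hcl : Topology.IsClosedEmbedding (fun s : ℝ => (s, z.2)) :=
    Topology.IsClosedEmbedding.of_continuous_injective_isClosedMap (by fun_prop)
      (fun a b h => (Prod.mk.inj h).1) (isClosedMap_prodMk_right z.2)
  have h := abs_le_half_integral_deriv (f := fun s => f (s, z.2)) (hf.comp (by fun_prop))
    (hc.comp_isClosedEmbedding hcl) z.1
  have hd : ∀ s, deriv (fun s => f (s, z.2)) s = pd 0 f (s, z.2) := fun s => by
    have := (hf.differentiable one_ne_zero (s, z.2)).hasFDerivAt.comp_hasDerivAt s
      ((hasDerivAt_id s).prodMk (hasDerivAt_const s z.2))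
    exact this.deriv
  simpa only [hd] using h

lemma abs_le_snd {f : ℝ × ℝ → ℝ} (hf : ContDiff ℝ 1 f) (hc : HasCompactSupport f)
    (z : ℝ × ℝ) : |f z| ≤ 1 / 2 * ∫ t, |pd 1 f (z.1, t)| := by
  have hcl : Topology.IsClosedEmbedding (fun t : ℝ => (z.1, t)) :=
    Topology.IsClosedEmbedding.of_continuous_injective_isClosedMap (by fun_prop)
      (fun a b h => (Prod.mk.inj h).2) (isClosedMap_prodMk_left z.1)
  have h := abs_le_half_integral_deriv (f := fun t => f (z.1, t)) (hf.comp (by fun_prop))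
    (hc.comp_isClosedEmbedding hcl) z.2
  have hd : ∀ s, deriv (fun t => f (z.1, t)) s = pd 1 f (z.1, s) := fun s => by
    have := (hf.differentiable one_ne_zero (z.1, s)).hasFDerivAt.comp_hasDerivAt s
      ((hasDerivAt_const s z.1).prodMk (hasDerivAt_id s))
    exact this.deriv
  simpa only [hd] using h

/-- The Gagliardo–Nirenberg inequality `W^{1,1}(ℝ²) ⊂ L²(ℝ²)`. It is applied to `f = |w|²`. -/
lemma integral_sq_le {f : ℝ × ℝ → ℝ} (hf : ContDiff ℝ 1 f) (hc : HasCompactSupport f) :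
    ∫ z, f z ^ 2 ≤ (1 / 2 * ∫ z, |pd 0 f z|) * (1 / 2 * ∫ z, |pd 1 f z|) := by
  have hi : ∀ i, Integrable (fun z => |pd i f z|) (volume.prod volume) := fun i =>
    ((continuous_pd hf i).integrable_of_hasCompactSupport (hc.fderiv_apply (𝕜 := ℝ) _)).abs
  obtain ⟨A, hAdef⟩ : ∃ A : ℝ → ℝ, A = fun y => 1 / 2 * ∫ s, |pd 0 f (s, y)| := ⟨_, rfl⟩
  obtain ⟨B, hBdef⟩ : ∃ B : ℝ → ℝ, B = fun x => 1 / 2 * ∫ t, |pd 1 f (x, t)| := ⟨_, rfl⟩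
  have hA : Integrable A := by
    rw [hAdef]
    exact (hi 0).integral_prod_right.const_mul _
  have hB : Integrable B := by
    rw [hBdef]
    exact (hi 1).integral_prod_left.const_mul _
  have hsq : Integrable (fun z => f z ^ 2) := by
    have hk : Continuous fun z => f z ^ 2 := hf.continuous.pow 2
    have hs : HasCompactSupport fun z => f z ^ 2 := by
      simp only [sq]
      exact hc.mul_left (f := f)
    exact hk.integrable_of_hasCompactSupport hs
  have hpt : ∀ z : ℝ × ℝ, f z ^ 2 ≤ B z.1 * A z.2 := fun z => by
    have h0 : |f z| ≤ A z.2 := by rw [hAdef]; exact abs_le_fst hf hc z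
    have h1 : |f z| ≤ B z.1 := by rw [hBdef]; exact abs_le_snd hf hc z
    calc f z ^ 2 = |f z| * |f z| := by rw [← sq, sq_abs]
      _ ≤ B z.1 * A z.2 := mul_le_mul h1 h0 (abs_nonneg _) ((abs_nonneg _).trans h1)
  have eA : ∫ y, A y = 1 / 2 * ∫ z, |pd 0 f z| := by
    rw [hAdef, integral_const_mul, Measure.volume_eq_prod, integral_prod_symm _ (hi 0)]
  have eB : ∫ x, B x = 1 / 2 * ∫ z, |pd 1 f z| := by
    rw [hBdef, integral_const_mul, Measure.volume_eq_prod, integral_prod _ (hi 1)]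
  rw [← eA, ← eB, mul_comm, ← integral_prod_mul]
  exact integral_mono hsq (hB.mul_prod hA) hpt

/-! ### Cauchy–Schwarz inequalities -/

lemma integral_mul_le_sqrt {f g : ℝ × ℝ → ℝ} (hf : Continuous f) (hfc : HasCompactSupport f)
    (hg : Continuous g) (hgc : HasCompactSupport g) (hf0 : ∀ x, 0 ≤ f x) (hg0 : ∀ x, 0 ≤ g x) :
    ∫ x, f x * g x ≤ √(∫ x, f x ^ 2) * √(∫ x, g x ^ 2) := by
  have h := integral_mul_le_Lp_mul_Lq_of_nonneg (μ := (volume : Measure (ℝ × ℝ)))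
    Real.HolderConjugate.two_two
    (Filter.Eventually.of_forall hf0) (Filter.Eventually.of_forall hg0)
    (hf.memLp_of_hasCompactSupport hfc) (hg.memLp_of_hasCompactSupport hgc)
  simpa [Real.sqrt_eq_rpow] using h

lemma half_deriv_bound (p q a b c d : ℝ) :
    |p * a + q * b| ≤ √(p ^ 2 + q ^ 2) * √(a ^ 2 + b ^ 2 + (c ^ 2 + d ^ 2)) := by
  rw [← Real.sqrt_mul (by positivity)]
  apply Real.abs_le_sqrt
  nlinarith [sq_nonneg (p * b - q * a), mul_nonneg (add_nonneg (sq_nonneg p) (sq_nonneg q))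
    (add_nonneg (sq_nonneg c) (sq_nonneg d))]

/-- Pointwise bound for the trilinear form: each of the two terms of `B̂(w) · v`
is at most `|w| |v| |∇w|`. -/
lemma trilinear_bound (p q r s a b c d : ℝ) :
    |(p * a + q * c + 1 / 2 * (a + d) * p) * r + (p * b + q * d + 1 / 2 * (a + d) * q) * s| ≤
      2 * (√(a ^ 2 + b ^ 2 + (c ^ 2 + d ^ 2)) * (√(p ^ 2 + q ^ 2) * √(r ^ 2 + s ^ 2))) := by
  have hP : 0 ≤ p ^ 2 + q ^ 2 := by positivity
  have hR : 0 ≤ r ^ 2 + s ^ 2 := by positivity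
  have hpr : (p * r + q * s) ^ 2 ≤ (p ^ 2 + q ^ 2) * (r ^ 2 + s ^ 2) := by
    nlinarith [sq_nonneg (p * s - q * r)]
  rw [← Real.sqrt_mul hP, ← Real.sqrt_mul (by positivity)]
  have h1 : |(p * a + q * c) * r + (p * b + q * d) * s| ≤
      √((a ^ 2 + b ^ 2 + (c ^ 2 + d ^ 2)) * ((p ^ 2 + q ^ 2) * (r ^ 2 + s ^ 2))) := by
    apply Real.abs_le_sqrt
    have e1 : ((p * a + q * c) * r + (p * b + q * d) * s) ^ 2 ≤
        ((p * a + q * c) ^ 2 + (p * b + q * d) ^ 2) * (r ^ 2 + s ^ 2) := by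
      nlinarith [sq_nonneg ((p * a + q * c) * s - (p * b + q * d) * r)]
    have e2 : (p * a + q * c) ^ 2 + (p * b + q * d) ^ 2 ≤
        (a ^ 2 + b ^ 2 + (c ^ 2 + d ^ 2)) * (p ^ 2 + q ^ 2) := by
      nlinarith [sq_nonneg (p * c - q * a), sq_nonneg (p * d - q * b)]
    calc _ ≤ _ := e1
      _ ≤ _ := mul_le_mul_of_nonneg_right e2 hR
      _ = _ := by ring
  have h2 : |1 / 2 * (a + d) * (p * r + q * s)| ≤
      √((a ^ 2 + b ^ 2 + (c ^ 2 + d ^ 2)) * ((p ^ 2 + q ^ 2) * (r ^ 2 + s ^ 2))) := by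
    apply Real.abs_le_sqrt
    have e : (1 / 2 * (a + d)) ^ 2 ≤ a ^ 2 + b ^ 2 + (c ^ 2 + d ^ 2) := by
      nlinarith [sq_nonneg (a - d), sq_nonneg a, sq_nonneg b, sq_nonneg c, sq_nonneg d]
    rw [mul_pow]
    exact mul_le_mul e hpr (sq_nonneg _) (by positivity)
  calc _ = |((p * a + q * c) * r + (p * b + q * d) * s)
        + 1 / 2 * (a + d) * (p * r + q * s)| := by congr 1; ring
    _ ≤ _ := abs_add_le _ _
    _ ≤ _ := by linarith

theorem Bhat_difference_estimate
    (O : Set (ℝ × ℝ)) (hO : IsOpen O) (hObdd : Bornology.IsBounded O)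
    (u v : Vec) (hu : H10 O u) (hv : H10 O v) :
    |vInner O (Bhat u) (u - v) - vInner O (Bhat v) (u - v)| ≤
      2 * (h1 O (u - v)) ^ ((3 : ℝ) / 2) * (l2 O (u - v)) ^ ((1 : ℝ) / 2) * l4 O v := by
  -- `K` is a compact subset of `O` off which `u`, `v` and their derivatives vanish
  obtain ⟨K, hK, hKO, hKu, hKv⟩ : ∃ K : Set (ℝ × ℝ), IsCompact K ∧ K ⊆ O ∧
      (∀ i, tsupport (u i) ⊆ K) ∧ (∀ i, tsupport (v i) ⊆ K) :=
    ⟨⋃ i, (tsupport (u i) ∪ tsupport (v i)),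
      isCompact_iUnion fun i => (hu i).2.1.isCompact.union (hv i).2.1.isCompact,
      Set.iUnion_subset fun i => Set.union_subset (hu i).2.2 (hv i).2.2,
      fun i => Set.subset_iUnion_of_subset i Set.subset_union_left,
      fun i => Set.subset_iUnion_of_subset i Set.subset_union_right⟩
  have cu : ∀ i, ContDiff ℝ 1 (u i) := fun i => (hu i).1.of_le (by exact_mod_cast le_top)
  have cv : ∀ i, ContDiff ℝ 1 (v i) := fun i => (hv i).1.of_le (by exact_mod_cast le_top)
  have du : ∀ i, Differentiable ℝ (u i) := fun i => (cu i).differentiable one_ne_zero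
  have dv : ∀ i, Differentiable ℝ (v i) := fun i => (cv i).differentiable one_ne_zero
  have zu : ∀ i, ∀ x ∉ K, u i x = 0 := fun i x hx =>
    image_eq_zero_of_notMem_tsupport fun h => hx (hKu i h)
  have zv : ∀ i, ∀ x ∉ K, v i x = 0 := fun i x hx =>
    image_eq_zero_of_notMem_tsupport fun h => hx (hKv i h)
  have zpu : ∀ i j, ∀ x ∉ K, pd i (u j) x = 0 := fun i j x hx => by
    rw [pd, fderiv_of_notMem_tsupport (𝕜 := ℝ) fun h => hx (hKu j h)]; rfl
  have zpv : ∀ i j, ∀ x ∉ K, pd i (v j) x = 0 := fun i j x hx => by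
    rw [pd, fderiv_of_notMem_tsupport (𝕜 := ℝ) fun h => hx (hKv j h)]; rfl
  obtain ⟨w, hw⟩ : ∃ w : Vec, w = u - v := ⟨_, rfl⟩
  rw [← hw]
  have ew : ∀ i x, w i x = u i x - v i x := fun i x => by rw [hw]; rfl
  have cw : ∀ i, ContDiff ℝ 1 (w i) := fun i => by rw [hw]; exact (cu i).sub (cv i)
  have dw : ∀ i, Differentiable ℝ (w i) := fun i => (cw i).differentiable one_ne_zero
  have epw : ∀ i j x, pd i (w j) x = pd i (u j) x - pd i (v j) x := fun i j x => by
    rw [hw]; exact pd_sub (du j x) (dv j x)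
  have zw : ∀ i, ∀ x ∉ K, w i x = 0 := fun i x hx => by rw [ew, zu i x hx, zv i x hx, sub_zero]
  have zpw : ∀ i j, ∀ x ∉ K, pd i (w j) x = 0 := fun i j x hx => by
    rw [epw, zpu i j x hx, zpv i j x hx, sub_zero]
  have kpu : ∀ i j, Continuous (pd i (u j)) := fun i j => continuous_pd (cu j) i
  have kpv : ∀ i j, Continuous (pd i (v j)) := fun i j => continuous_pd (cv j) i
  have kpw : ∀ i j, Continuous (pd i (w j)) := fun i j => continuous_pd (cw j) i
  have ku : ∀ i, Continuous (u i) := fun i => (cu i).continuous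
  have kv : ∀ i, Continuous (v i) := fun i => (cv i).continuous
  have kw : ∀ i, Continuous (w i) := fun i => (cw i).continuous
  have toFull : ∀ f : ℝ × ℝ → ℝ, (∀ x ∉ K, f x = 0) → ∫ x in O, f x = ∫ x, f x := fun f hf =>
    setIntegral_eq_integral_of_forall_compl_eq_zero fun x hx => hf x fun h => hx (hKO h)
  have cs : ∀ f : ℝ × ℝ → ℝ, (∀ x ∉ K, f x = 0) → HasCompactSupport f := fun f hf =>
    HasCompactSupport.intro hK fun x hx => hf x hx
  have int : ∀ f : ℝ × ℝ → ℝ, Continuous f → (∀ x ∉ K, f x = 0) → Integrable f :=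
    fun f hc hf => hc.integrable_of_hasCompactSupport (cs f hf)
  set W : ℝ × ℝ → ℝ := fun x => √(w 0 x ^ 2 + w 1 x ^ 2) with hW
  set V : ℝ × ℝ → ℝ := fun x => √(v 0 x ^ 2 + v 1 x ^ 2) with hV
  set G : ℝ × ℝ → ℝ := fun x => √(pd 0 (w 0) x ^ 2 + pd 0 (w 1) x ^ 2
    + (pd 1 (w 0) x ^ 2 + pd 1 (w 1) x ^ 2)) with hG
  have kW : Continuous W := by fun_prop
  have kV : Continuous V := by fun_prop
  have kG : Continuous G := by fun_prop
  have zW : ∀ x ∉ K, W x = 0 := fun x hx => by simp [hW, zw _ x hx]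
  have zV : ∀ x ∉ K, V x = 0 := fun x hx => by simp [hV, zv _ x hx]
  have zG : ∀ x ∉ K, G x = 0 := fun x hx => by simp [hG, zpw _ _ x hx]
  have sW : ∀ x, W x ^ 2 = w 0 x ^ 2 + w 1 x ^ 2 := fun x => Real.sq_sqrt (by positivity)
  have sV : ∀ x, V x ^ 2 = v 0 x ^ 2 + v 1 x ^ 2 := fun x => Real.sq_sqrt (by positivity)
  have sG : ∀ x, G x ^ 2 = pd 0 (w 0) x ^ 2 + pd 0 (w 1) x ^ 2
    + (pd 1 (w 0) x ^ 2 + pd 1 (w 1) x ^ 2) := fun x => Real.sq_sqrt (by positivity)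
  have nW : ∀ x, 0 ≤ W x := fun x => Real.sqrt_nonneg _
  have nV : ∀ x, 0 ≤ V x := fun x => Real.sqrt_nonneg _
  have nG : ∀ x, 0 ≤ G x := fun x => Real.sqrt_nonneg _
  have eh1 : h1 O w = √(∫ x, G x ^ 2) := by
    rw [h1, toFull _ fun x hx => by simp [zpw _ _ x hx]]
    simp only [sG, Fin.sum_univ_two]
  have el2 : l2 O w = √(∫ x, W x ^ 2) := by
    rw [l2, toFull _ fun x hx => by simp [zw _ x hx]]
    simp only [sW, Fin.sum_univ_two]
  have el4 : l4 O v = (∫ x, (V x ^ 2) ^ 2) ^ ((1 : ℝ) / 4) := by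
    rw [l4, toFull _ fun x hx => by simp [zv _ x hx]]
    simp only [sV, Fin.sum_univ_two]
  -- `⟨B̂(u) - B̂(v), w⟩ = -b(w, w, v)`: the two integrands differ by the divergence of `F`
  have hskew : vInner O (Bhat u) w - vInner O (Bhat v) w
      = -∫ x, ∑ j, Bhat w j x * v j x := by
    set F : Fin 2 → ℝ × ℝ → ℝ := fun i x =>
      w i x * (v 0 x * w 0 x + v 1 x * w 1 x)
        + 1 / 2 * (u i x * (w 0 x * w 0 x + w 1 x * w 1 x)) with hF
    have cF : ∀ i, ContDiff ℝ 1 (F i) := fun i => by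
      have := cu i; have := cw i; have := cw 0; have := cw 1; have := cv 0; have := cv 1
      fun_prop
    have zF : ∀ i, ∀ x ∉ K, F i x = 0 := fun i x hx => by simp [hF, zw _ x hx]
    have iF : ∀ i, ∫ x, pd i (F i) x = 0 := fun i =>
      integral_pd_eq_zero (cF i) (cs _ (zF i)) i
    have pF : ∀ i x, pd i (F i) x =
        pd i (w i) x * (v 0 x * w 0 x + v 1 x * w 1 x)
        + w i x * (pd i (v 0) x * w 0 x + v 0 x * pd i (w 0) x
          + (pd i (v 1) x * w 1 x + v 1 x * pd i (w 1) x))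
        + 1 / 2 * (pd i (u i) x * (w 0 x * w 0 x + w 1 x * w 1 x)
          + u i x * (pd i (w 0) x * w 0 x + w 0 x * pd i (w 0) x
            + (pd i (w 1) x * w 1 x + w 1 x * pd i (w 1) x))) := fun i x => by
      have a0 := du i x
      have a1 := dw i x
      have a2 := dw 0 x
      have a3 := dw 1 x
      have a4 := dv 0 x
      have a5 := dv 1 x
      rw [hF]
      dsimp only
      rw [pd_add (by fun_prop) (by fun_prop), pd_mul a1 (by fun_prop),
        pd_add (by fun_prop) (by fun_prop), pd_mul a4 a2, pd_mul a5 a3,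
        pd_const_mul (by fun_prop), pd_mul a0 (by fun_prop),
        pd_add (by fun_prop) (by fun_prop), pd_mul a2 a2, pd_mul a3 a3]
    have kB : ∀ a : Vec, (∀ i, Continuous (a i)) → (∀ i j, Continuous (pd i (a j))) →
        ∀ j, Continuous (Bhat a j) := fun a h h' j => by
      unfold Bhat Bhat2 conv divg
      fun_prop
    have kBu := kB u ku kpu
    have kBv := kB v kv kpv
    have kBw := kB w kw kpw
    have zpF : ∀ i, ∀ x ∉ K, pd i (F i) x = 0 := fun i x hx => by
      simp [pF, zw _ x hx, zpw _ _ x hx]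
    have ipF : ∀ i, Integrable (pd i (F i)) := fun i =>
      int _ (continuous_pd (cF i) i) (zpF i)
    have i1 : Integrable fun x => ∑ j, Bhat u j x * w j x :=
      int _ (by fun_prop) fun x hx => by simp [zw _ x hx]
    have i2 : Integrable fun x => ∑ j, Bhat v j x * w j x :=
      int _ (by fun_prop) fun x hx => by simp [zw _ x hx]
    have i3 : Integrable fun x => ∑ j, Bhat w j x * v j x :=
      int _ (by fun_prop) fun x hx => by simp [zv _ x hx]
    have hpt : ∀ x, (∑ j, Bhat u j x * w j x) - (∑ j, Bhat v j x * w j x) =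
        (pd 0 (F 0) x + pd 1 (F 1) x) - ∑ j, Bhat w j x * v j x := fun x => by
      rw [pF, pF]
      simp only [Bhat, Bhat2, conv, divg, Fin.sum_univ_two, ew, epw]
      ring
    rw [vInner, vInner, toFull _ fun x hx => by simp [zw _ x hx],
      toFull _ fun x hx => by simp [zw _ x hx], ← integral_sub i1 i2]
    simp only [hpt]
    have ipF01 : Integrable fun x => pd 0 (F 0) x + pd 1 (F 1) x := (ipF 0).add (ipF 1)
    rw [integral_sub ipF01 i3, integral_add (ipF 0) (ipF 1), iF, iF]
    ring
  -- the pointwise bound followed by Cauchy–Schwarz twice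
  have hWV : ∫ x, (W x * V x) ^ 2 ≤ √(∫ x, (W x ^ 2) ^ 2) * √(∫ x, (V x ^ 2) ^ 2) := by
    simp only [mul_pow]
    exact integral_mul_le_sqrt (by fun_prop) (cs _ fun x hx => by simp [zW x hx])
      (by fun_prop) (cs _ fun x hx => by simp [zV x hx])
      (fun x => sq_nonneg _) (fun x => sq_nonneg _)
  have htri : |∫ x, ∑ j, Bhat w j x * v j x| ≤
      2 * (√(∫ x, G x ^ 2) * √(∫ x, (W x * V x) ^ 2)) := by
    have iGWV : Integrable fun x => 2 * (G x * (W x * V x)) :=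
      int _ (by fun_prop) fun x hx => by simp [zG x hx]
    calc |∫ x, ∑ j, Bhat w j x * v j x| ≤ ∫ x, 2 * (G x * (W x * V x)) := by
          rw [← Real.norm_eq_abs]
          refine norm_integral_le_of_norm_le iGWV (Filter.Eventually.of_forall fun x => ?_)
          rw [Real.norm_eq_abs]
          simp only [Bhat, Bhat2, conv, divg, Fin.sum_univ_two]
          exact trilinear_bound _ _ _ _ _ _ _ _
      _ = 2 * ∫ x, G x * (W x * V x) := integral_const_mul _ _
      _ ≤ _ := by
          gcongr
          exact integral_mul_le_sqrt kG (cs _ zG) (by fun_prop)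
            (cs _ fun x hx => by simp [zW x hx]) nG fun x => mul_nonneg (nW x) (nV x)
  -- the Ladyzhenskaya inequality `∫ |w|⁴ ≤ |w|² ‖w‖²`
  have hlad : ∫ x, (W x ^ 2) ^ 2 ≤ (l2 O w * h1 O w) ^ 2 := by
    have cP : ContDiff ℝ 1 fun x => W x ^ 2 := by
      have := cw 0; have := cw 1
      simp only [sW]
      fun_prop
    have hP : HasCompactSupport fun x => W x ^ 2 := cs _ fun x hx => by simp [zW x hx]
    have hpP : ∀ i x, 1 / 2 * |pd i (fun x => W x ^ 2) x|
        = |w 0 x * pd i (w 0) x + w 1 x * pd i (w 1) x| := fun i x => by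
      have a2 := dw 0 x
      have a3 := dw 1 x
      simp only [sW, sq]
      rw [pd_add (by fun_prop) (by fun_prop), pd_mul a2 a2, pd_mul a3 a3,
        ← abs_of_pos (show (0 : ℝ) < 1 / 2 by norm_num), ← abs_mul]
      congr 1
      ring
    have hle : ∀ i, 1 / 2 * ∫ x, |pd i (fun x => W x ^ 2) x| ≤ l2 O w * h1 O w := fun i => by
      rw [← integral_const_mul, el2, eh1]
      simp only [hpP]
      refine le_trans (integral_mono ?_ ?_ fun x => ?_)
        (integral_mul_le_sqrt kW (cs _ zW) kG (cs _ zG) nW nG)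
      · exact int _ (by fun_prop) fun x hx => by simp [zw _ x hx]
      · exact int _ (by fun_prop) fun x hx => by simp [zW x hx]
      · fin_cases i
        · exact half_deriv_bound _ _ _ _ _ _
        · have := half_deriv_bound (w 0 x) (w 1 x) (pd 1 (w 0) x) (pd 1 (w 1) x)
            (pd 0 (w 0) x) (pd 0 (w 1) x)
          rw [add_comm (_ + _)] at this
          exact this
    rw [sq (l2 O w * h1 O w)]
    refine (integral_sq_le cP hP).trans (mul_le_mul (hle 0) (hle 1) ?_ ?_)
    · exact mul_nonneg (by norm_num) (integral_nonneg fun x => abs_nonneg _)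
    · rw [el2, eh1]; positivity
  have nh : 0 ≤ h1 O w := Real.sqrt_nonneg _
  have nl : 0 ≤ l2 O w := Real.sqrt_nonneg _
  have nQ : 0 ≤ ∫ x, (V x ^ 2) ^ 2 := integral_nonneg fun x => by positivity
  have hQ : √√(∫ x, (V x ^ 2) ^ 2) = l4 O v := by
    rw [el4, Real.sqrt_eq_rpow, Real.sqrt_eq_rpow, ← Real.rpow_mul nQ]
    norm_num
  rw [hskew, abs_neg]
  calc |∫ x, ∑ j, Bhat w j x * v j x|
      ≤ 2 * (h1 O w * √(∫ x, (W x * V x) ^ 2)) := by rw [eh1]; exact htri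
    _ ≤ 2 * (h1 O w * √((l2 O w * h1 O w) * √(∫ x, (V x ^ 2) ^ 2))) := by
        gcongr
        refine hWV.trans (mul_le_mul_of_nonneg_right ?_ (Real.sqrt_nonneg _))
        exact Real.sqrt_le_iff.2 ⟨mul_nonneg nl nh, hlad⟩
    _ = 2 * (h1 O w) ^ ((3 : ℝ) / 2) * (l2 O w) ^ ((1 : ℝ) / 2) * l4 O v := by
        rw [Real.sqrt_mul (mul_nonneg nl nh), Real.sqrt_mul nl, hQ,
          show (3 : ℝ) / 2 = 1 + 1 / 2 by norm_num,
          Real.rpow_add' nh (by norm_num), Real.rpow_one,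
          ← Real.sqrt_eq_rpow, ← Real.sqrt_eq_rpow]
        ring

end
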